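/- Under the feature and core-state assumptions, if λ† ∈ Λ is a maximizer of CoreLP and π† ∈ Δ_𝒜 is defined by π†(a) = λ†_{s₀a}, then v*(s₀) − Σ_{a∈𝒜} π†(a)·q*(s₀,a) ≤ 20γ·ε_approx/(1−γ). -/

import Mathlib

open scoped BigOperators

namespace MDPPlan

variable {S A : Type} [Fintype S] [Fintype A] [DecidableEq S] {d m : ℕ}

/-- `φ_sᵀθ`: dot product of the feature vector of state `s` with weights `θ`. -/
noncomputable def phiDot (Φ : S → Fin d → ℝ) (θ : Fin d → ℝ) (s : S) : ℝ :=
  ∑ j, Φ s j * θ j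

/-- The sequence `𝒮₊ = (s₀, s₁, …, s_m)`: `none` is the planning state `s₀`,
`some i` is the `i`-th core state. -/
def splus (s₀ : S) (c : Fin m → S) : Option (Fin m) → S := fun o => o.elim s₀ c

/-- State-transition matrix `P_π` of a stationary policy `π`. -/
noncomputable def Ppi (P : S → A → S → ℝ) (π : S → A → ℝ) : Matrix S S ℝ :=
  Matrix.of fun s s' => ∑ a, π s a * P s a s'

/-- Expected reward `r_π` of a stationary policy `π`. -/
noncomputable def rpi (r : S → A → ℝ) (π : S → A → ℝ) : S → ℝ :=
  fun s => ∑ a, π s a * r s a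

/-- `π` is a stationary policy: each `π(·|s)` is a probability distribution over actions. -/
def IsPolicy (π : S → A → ℝ) : Prop := (∀ s a, 0 ≤ π s a) ∧ ∀ s, ∑ a, π s a = 1

/-- Value function `v_π = Σ_{t≥0} (γ P_π)^t r_π`. -/
noncomputable def vpi (γ : ℝ) (P : S → A → S → ℝ) (r : S → A → ℝ) (π : S → A → ℝ) :
    S → ℝ :=
  ∑' t : ℕ, ((γ • Ppi P π) ^ t).mulVec (rpi r π)

/-- Optimal value function `v*(s) = sup_π v_π(s)`. -/
noncomputable def vstar (γ : ℝ) (P : S → A → S → ℝ) (r : S → A → ℝ) : S → ℝ :=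
  fun s => ⨆ π : {π : S → A → ℝ // IsPolicy π}, vpi γ P r π.1 s

/-- Optimal action-value function `q*(s,a) = r_{sa} + γ P_{sa} v*`. -/
noncomputable def qstar (γ : ℝ) (P : S → A → S → ℝ) (r : S → A → ℝ) (s : S) (a : A) : ℝ :=
  r s a + γ * ∑ s', P s a s' * vstar γ P r s'

/-- `ε_approx = inf_θ max_s |v*(s) − φ_sᵀθ|`. -/
noncomputable def epsApprox (Φ : S → Fin d → ℝ) (v : S → ℝ) : ℝ :=
  ⨅ θ : Fin d → ℝ, ⨆ s : S, |v s - phiDot Φ θ s|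

/-- Membership in `Λ`: nonnegative and the `s₀`-block sums to one. -/
def InLambda (lam : Option (Fin m) × A → ℝ) : Prop :=
  (∀ p, 0 ≤ lam p) ∧ ∑ a, lam (none, a) = 1

/-- The CoreLP equality constraint `φ_{s₀}ᵀ + λᵀW(γP − E)Φ = 0ᵀ`. -/
def CoreLPConstraint (γ : ℝ) (P : S → A → S → ℝ) (Φ : S → Fin d → ℝ) (s₀ : S)
    (c : Fin m → S) (lam : Option (Fin m) × A → ℝ) : Prop :=
  ∀ j : Fin d, Φ s₀ j + ∑ p : Option (Fin m) × A,
    lam p * (γ * (∑ s', P (splus s₀ c p.1) p.2 s' * Φ s' j) - Φ (splus s₀ c p.1) j) = 0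

/-- The CoreLP objective `λᵀWr`. -/
noncomputable def CoreLPObj (r : S → A → ℝ) (s₀ : S) (c : Fin m → S)
    (lam : Option (Fin m) × A → ℝ) : ℝ :=
  ∑ p : Option (Fin m) × A, lam p * r (splus s₀ c p.1) p.2

/-- The optimal value `V†` of CoreLP. -/
noncomputable def Vdagger (γ : ℝ) (P : S → A → S → ℝ) (r : S → A → ℝ)
    (Φ : S → Fin d → ℝ) (s₀ : S) (c : Fin m → S) : ℝ :=
  sSup {x : ℝ | ∃ lam : Option (Fin m) × A → ℝ,
    InLambda lam ∧ CoreLPConstraint γ P Φ s₀ c lam ∧ x = CoreLPObj r s₀ c lam}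

/-- Feasibility for LRALP: `W*r + W*(γP − E)Φθ ≤ 0`. -/
def LRALPFeasible (γ : ℝ) (P : S → A → S → ℝ) (r : S → A → ℝ) (Φ : S → Fin d → ℝ)
    (c : Fin m → S) (θ : Fin d → ℝ) : Prop :=
  ∀ (i : Fin m) (a : A),
    r (c i) a + (γ * (∑ s', P (c i) a s' * phiDot Φ θ s') - phiDot Φ θ (c i)) ≤ 0

/-- `V_LRALP(μ) = min { μᵀΦθ : θ feasible for LRALP }`. -/
noncomputable def VLRALP (γ : ℝ) (P : S → A → S → ℝ) (r : S → A → ℝ) (Φ : S → Fin d → ℝ)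
    (c : Fin m → S) (μ : S → ℝ) : ℝ :=
  sInf {x : ℝ | ∃ θ : Fin d → ℝ, LRALPFeasible γ P r Φ c θ ∧ x = ∑ s, μ s * phiDot Φ θ s}

/-- The Saddle CoreLP objective `f(λ,θ) = λᵀWr + φ_{s₀}ᵀθ + λᵀW(γP − E)Φθ`. -/
noncomputable def fObj (γ : ℝ) (P : S → A → S → ℝ) (r : S → A → ℝ) (Φ : S → Fin d → ℝ)
    (s₀ : S) (c : Fin m → S) (lam : Option (Fin m) × A → ℝ) (θ : Fin d → ℝ) : ℝ :=
  CoreLPObj r s₀ c lam + phiDot Φ θ s₀ +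
    ∑ p : Option (Fin m) × A,
      lam p * (γ * (∑ s', P (splus s₀ c p.1) p.2 s' * phiDot Φ θ s') -
        phiDot Φ θ (splus s₀ c p.1))

/-- The Saddle LRALP objective `g_μ(λ*,θ) = λ*ᵀW*r + μᵀΦθ + λ*ᵀW*(γP − E)Φθ`. -/
noncomputable def gObj (γ : ℝ) (P : S → A → S → ℝ) (r : S → A → ℝ) (Φ : S → Fin d → ℝ)
    (c : Fin m → S) (μ : S → ℝ) (lamS : Fin m × A → ℝ) (θ : Fin d → ℝ) : ℝ :=
  (∑ p : Fin m × A, lamS p * r (c p.1) p.2) + (∑ s, μ s * phiDot Φ θ s) +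
    ∑ p : Fin m × A,
      lamS p * (γ * (∑ s', P (c p.1) p.2 s' * phiDot Φ θ s') - phiDot Φ θ (c p.1))

/-- The `𝓑`-bounded duality gap `δ_𝓑(λ̂,θ̂) = max_{λ∈Λ_γ} f(λ,θ̂) − inf_{θ∈𝓑} f(λ̂,θ)`. -/
noncomputable def dualityGap (γ : ℝ) (P : S → A → S → ℝ) (r : S → A → ℝ)
    (Φ : S → Fin d → ℝ) (s₀ : S) (c : Fin m → S) (Bset : Set (Fin d → ℝ))
    (lamHat : Option (Fin m) × A → ℝ) (θHat : Fin d → ℝ) : ℝ :=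
  sSup {x : ℝ | ∃ lam : Option (Fin m) × A → ℝ,
      InLambda lam ∧ (∑ p, |lam p|) = 1 / (1 - γ) ∧ x = fObj γ P r Φ s₀ c lam θHat} -
    sInf {x : ℝ | ∃ θ ∈ Bset, x = fObj γ P r Φ s₀ c lamHat θ}


section Helpers

attribute [local instance] Matrix.linftyOpNormedRing Matrix.linftyOpNormedAlgebra

lemma neumann {n : Type} [Fintype n] [DecidableEq n] (γ : ℝ) (hγ0 : 0 ≤ γ) (hγ1 : γ < 1)
    (K : Matrix n n ℝ) (hK0 : ∀ i j, 0 ≤ K i j) (hK1 : ∀ i, ∑ j, K i j = 1) :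
    ∃ N : Matrix n n ℝ, (∀ w : n → ℝ, HasSum (fun t : ℕ => ((γ • K) ^ t).mulVec w) (N.mulVec w)) ∧
      N * (1 - γ • K) = 1 ∧ (1 - γ • K) * N = 1 ∧ ∀ i j, 0 ≤ N i j := by
  have hn : ‖γ • K‖ < 1 := by
    refine lt_of_le_of_lt ?_ hγ1
    rw [Matrix.linfty_opNorm_def]
    have : (Finset.univ.sup fun i : n => ∑ j : n, ‖(γ • K) i j‖₊) ≤ (⟨γ, hγ0⟩ : NNReal) := by
      refine Finset.sup_le fun i _ => ?_
      refine NNReal.coe_le_coe.1 ?_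
      rw [NNReal.coe_sum]
      simp only [coe_nnnorm, NNReal.coe_mk]
      have : ∀ j, ‖(γ • K) i j‖ = γ * K i j := fun j => by
        simp [abs_of_nonneg hγ0, abs_of_nonneg (hK0 i j)]
      rw [Finset.sum_congr rfl fun j _ => this j, ← Finset.mul_sum, hK1, mul_one]
      exact le_refl γ
    exact_mod_cast this
  have hs : Summable (fun t : ℕ => (γ • K) ^ t) := summable_geometric_of_norm_lt_one hn
  have hpow : ∀ (t : ℕ) i j, 0 ≤ ((γ • K) ^ t) i j := by
    intro t
    induction t with
    | zero => intro i j; simp only [pow_zero, Matrix.one_apply]; split_ifs <;> norm_num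
    | succ t ih =>
      intro i j
      rw [pow_succ, Matrix.mul_apply]
      exact Finset.sum_nonneg fun k _ => mul_nonneg (ih i k) (mul_nonneg hγ0 (hK0 k j))
  have hent : ∀ i j, HasSum (fun t : ℕ => ((γ • K) ^ t) i j) ((∑' t : ℕ, (γ • K) ^ t) i j) := by
    intro i j
    have h1 := Pi.hasSum.1 hs.hasSum i
    exact Pi.hasSum.1 h1 j
  refine ⟨∑' t : ℕ, (γ • K) ^ t, ?_, geom_series_mul_neg _ hn, mul_neg_geom_series _ hn, ?_⟩
  · intro w
    rw [Pi.hasSum]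
    intro i
    simp only [Matrix.mulVec, dotProduct]
    exact hasSum_sum fun j _ => (hent i j).mul_right (w j)
  · intro i j
    exact (hent i j).nonneg fun t => hpow t i j

end Helpers

lemma bellman_fixed {S A : Type} [Fintype S] [Fintype A] [Nonempty A]
    (γ : ℝ) (hγ0 : 0 ≤ γ) (hγ1 : γ < 1)
    (P : S → A → S → ℝ) (hP0 : ∀ s a s', 0 ≤ P s a s')
    (hP1 : ∀ s a, ∑ s', P s a s' = 1) (r : S → A → ℝ) :
    ∃ v : S → ℝ, (∀ s a, r s a + γ * ∑ s', P s a s' * v s' ≤ v s) ∧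
      ∀ s, ∃ a, v s = r s a + γ * ∑ s', P s a s' * v s' := by
  let T : (S → ℝ) → S → ℝ := fun v s =>
    Finset.univ.sup' Finset.univ_nonempty (fun a => r s a + γ * ∑ s', P s a s' * v s')
  have key : ∀ u v : S → ℝ, ∀ s, T u s ≤ T v s + γ * dist u v := by
    intro u v s
    refine Finset.sup'_le _ _ fun a _ => ?_
    have h1 : r s a + γ * ∑ s', P s a s' * v s' ≤ T v s :=
      Finset.le_sup' (fun a => r s a + γ * ∑ s', P s a s' * v s') (Finset.mem_univ a)
    have h2 : ∑ s', P s a s' * u s' ≤ ∑ s', P s a s' * v s' + dist u v := by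
      have : ∑ s', P s a s' * u s' ≤ ∑ s', (P s a s' * v s' + P s a s' * dist u v) := by
        refine Finset.sum_le_sum fun s' _ => ?_
        rw [← mul_add]
        refine mul_le_mul_of_nonneg_left ?_ (hP0 s a s')
        have := (le_abs_self _).trans (dist_le_pi_dist u v s')
        linarith
      rwa [Finset.sum_add_distrib, ← Finset.sum_mul, hP1, one_mul] at this
    have h3 := mul_le_mul_of_nonneg_left h2 hγ0
    linarith
  have hc : ContractingWith (⟨γ, hγ0⟩ : NNReal) T := by
    refine ⟨?_, LipschitzWith.of_dist_le_mul fun u v => ?_⟩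
    · exact_mod_cast hγ1
    · refine (dist_pi_le_iff (mul_nonneg hγ0 dist_nonneg)).2 fun s => ?_
      rw [Real.dist_eq, abs_le]
      have h1 := key u v s
      have h2 := key v u s
      rw [dist_comm v u] at h2
      change -(γ * dist u v) ≤ _ ∧ _ ≤ γ * dist u v
      constructor <;> linarith
  have hf := hc.fixedPoint_isFixedPt
  refine ⟨ContractingWith.fixedPoint T hc, fun s a => ?_, fun s => ?_⟩
  · refine le_of_le_of_eq ?_ (congrFun hf s)
    exact Finset.le_sup' (fun a => r s a + γ * ∑ s', P s a s' * ContractingWith.fixedPoint T hc s') (Finset.mem_univ a)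
  · obtain ⟨a, -, ha⟩ := Finset.exists_mem_eq_sup' (Finset.univ_nonempty (α := A))
      (fun a => r s a + γ * ∑ s', P s a s' * ContractingWith.fixedPoint T hc s')
    refine ⟨a, ?_⟩
    rw [← ha]
    exact (congrFun hf s).symm

lemma Ppi_mulVec {S A : Type} [Fintype S] [Fintype A]
    (γ : ℝ) (P : S → A → S → ℝ) (r : S → A → ℝ) (π : S → A → ℝ) (v : S → ℝ) (s : S) :
    rpi r π s + ((γ • Ppi P π).mulVec v) s =
      ∑ a, π s a * (r s a + γ * ∑ s', P s a s' * v s') := by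
  simp only [rpi, Ppi, Matrix.mulVec, dotProduct, Matrix.smul_apply, Matrix.of_apply, smul_eq_mul,
    mul_add, Finset.sum_add_distrib, Finset.mul_sum, Finset.sum_mul]
  rw [Finset.sum_comm]
  congr 1
  refine Finset.sum_congr rfl fun a _ => Finset.sum_congr rfl fun s' _ => by ring

lemma vstar_eq {S A : Type} [Fintype S] [Fintype A] [DecidableEq S] [Nonempty A]
    (γ : ℝ) (hγ0 : 0 ≤ γ) (hγ1 : γ < 1)
    (P : S → A → S → ℝ) (hP0 : ∀ s a s', 0 ≤ P s a s')
    (hP1 : ∀ s a, ∑ s', P s a s' = 1) (r : S → A → ℝ) (v : S → ℝ)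
    (hv1 : ∀ s a, r s a + γ * ∑ s', P s a s' * v s' ≤ v s)
    (hv2 : ∀ s, ∃ a, v s = r s a + γ * ∑ s', P s a s' * v s') :
    vstar γ P r = v := by
  classical
  have hpol : ∀ π : S → A → ℝ, IsPolicy π → ∃ N : Matrix S S ℝ,
      vpi γ P r π = N.mulVec (rpi r π) ∧ N * (1 - γ • Ppi P π) = 1 ∧ ∀ i j, 0 ≤ N i j := by
    intro π hπ
    obtain ⟨N, h1, h2, -, h4⟩ := neumann γ hγ0 hγ1 (Ppi P π)
      (fun i j => Finset.sum_nonneg fun a _ => mul_nonneg (hπ.1 i a) (hP0 i a j))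
      (fun i => by
        simp only [Ppi, Matrix.of_apply]
        rw [Finset.sum_comm]
        simp only [← Finset.mul_sum, hP1, mul_one, hπ.2])
    exact ⟨N, (h1 _).tsum_eq, h2, h4⟩
  have hle : ∀ π : S → A → ℝ, IsPolicy π → ∀ s, vpi γ P r π s ≤ v s := by
    intro π hπ s
    obtain ⟨N, h1, h2, h4⟩ := hpol π hπ
    have hv : v = N.mulVec ((1 - γ • Ppi P π).mulVec v) := by
      rw [Matrix.mulVec_mulVec, h2, Matrix.one_mulVec]
    rw [h1]
    conv_rhs => rw [hv]
    refine Finset.sum_le_sum fun s' _ => mul_le_mul_of_nonneg_left ?_ (h4 s s')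
    rw [Matrix.sub_mulVec, Matrix.one_mulVec, Pi.sub_apply]
    have h5 := Ppi_mulVec γ P r π v s'
    have h6 : ∑ a, π s' a * (r s' a + γ * ∑ s'', P s' a s'' * v s'') ≤ ∑ a, π s' a * v s' :=
      Finset.sum_le_sum fun a _ => mul_le_mul_of_nonneg_left (hv1 s' a) (hπ.1 s' a)
    rw [← Finset.sum_mul, hπ.2, one_mul] at h6
    linarith
  choose g hg using hv2
  let π₀ : S → A → ℝ := fun s a => if a = g s then 1 else 0
  have hπ₀ : IsPolicy π₀ := by
    refine ⟨fun s a => ?_, fun s => by simp [π₀]⟩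
    simp only [π₀]; split_ifs <;> norm_num
  have heq : vpi γ P r π₀ = v := by
    obtain ⟨N, h1, h2, h4⟩ := hpol π₀ hπ₀
    have h3 : rpi r π₀ = (1 - γ • Ppi P π₀).mulVec v := by
      funext s
      rw [Matrix.sub_mulVec, Matrix.one_mulVec, Pi.sub_apply]
      have h5 := Ppi_mulVec γ P r π₀ v s
      have h6 : ∑ a, π₀ s a * (r s a + γ * ∑ s'', P s a s'' * v s'') = v s := by
        conv_rhs => rw [hg s]
        simp [π₀]
      linarith
    rw [h1, h3, Matrix.mulVec_mulVec, h2, Matrix.one_mulVec]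
  funext s
  have : Nonempty {π : S → A → ℝ // IsPolicy π} := ⟨⟨π₀, hπ₀⟩⟩
  apply le_antisymm
  · exact ciSup_le fun π => hle π.1 π.2 s
  · have := le_ciSup (f := fun π : {π : S → A → ℝ // IsPolicy π} => vpi γ P r π.1 s)
      ⟨v s, by rintro _ ⟨π, rfl⟩; exact hle π.1 π.2 s⟩ ⟨π₀, hπ₀⟩
    simp only [heq] at this
    exact this

lemma sum_split {A : Type} [Fintype A] {m : ℕ} (F : Option (Fin m) × A → ℝ) :
    ∑ p, F p = ∑ a, F (none, a) + ∑ i, ∑ a, F (some i, a) := by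
  rw [Fintype.sum_prod_type, Fintype.sum_option]

lemma constr_phi {S A : Type} [Fintype S] [Fintype A] {d m : ℕ} (γ : ℝ)
    (P : S → A → S → ℝ) (Φ : S → Fin d → ℝ) (c : Fin m → S) (s₀ : S)
    (lam : Option (Fin m) × A → ℝ)
    (hlam : InLambda lam) (hconstr : CoreLPConstraint γ P Φ s₀ c lam) (θ : Fin d → ℝ) :
    γ * ∑ a, lam (none, a) * ∑ s', P s₀ a s' * phiDot Φ θ s' =
      ∑ i, ∑ a, lam (some i, a) *
        (phiDot Φ θ (c i) - γ * ∑ s', P (c i) a s' * phiDot Φ θ s') := by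
  have hPphi : ∀ s a, ∑ s', P s a s' * phiDot Φ θ s' =
      ∑ j, (∑ s', P s a s' * Φ s' j) * θ j := by
    intro s a
    simp only [phiDot, Finset.mul_sum, Finset.sum_mul]
    rw [Finset.sum_comm]
    exact Finset.sum_congr rfl fun _ _ => Finset.sum_congr rfl fun _ _ => by ring
  have h1 : phiDot Φ θ s₀ + ∑ p : Option (Fin m) × A,
      lam p * (γ * (∑ s', P (splus s₀ c p.1) p.2 s' * phiDot Φ θ s') -
        phiDot Φ θ (splus s₀ c p.1)) = 0 := by
    have h2 : ∑ j, (Φ s₀ j + ∑ p : Option (Fin m) × A,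
      lam p * (γ * (∑ s', P (splus s₀ c p.1) p.2 s' * Φ s' j) - Φ (splus s₀ c p.1) j)) * θ j
        = 0 := Finset.sum_eq_zero fun j _ => by rw [hconstr j, zero_mul]
    rw [← h2]
    simp only [add_mul, Finset.sum_add_distrib, hPphi]
    rw [Finset.sum_congr rfl fun j _ => Finset.sum_mul _ _ (θ j), Finset.sum_comm]
    simp only [phiDot]
    congr 1
    refine Finset.sum_congr rfl fun p _ => ?_
    rw [Finset.mul_sum, ← Finset.sum_sub_distrib, Finset.mul_sum]
    exact Finset.sum_congr rfl fun j _ => by ring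
  rw [sum_split] at h1
  simp only [splus, Option.elim] at h1
  have h3 : ∑ a, lam (none, a) * (γ * (∑ s', P s₀ a s' * phiDot Φ θ s') - phiDot Φ θ s₀) =
      γ * ∑ a, lam (none, a) * (∑ s', P s₀ a s' * phiDot Φ θ s') - phiDot Φ θ s₀ := by
    simp only [mul_sub, Finset.sum_sub_distrib]
    rw [← Finset.sum_mul, hlam.2, one_mul, Finset.mul_sum]
    congr 1
    exact Finset.sum_congr rfl fun j _ => by ring
  have h4 : ∑ i, ∑ a, lam (some i, a) *
        (phiDot Φ θ (c i) - γ * ∑ s', P (c i) a s' * phiDot Φ θ s') =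
      -∑ i, ∑ a, lam (some i, a) *
        (γ * (∑ s', P (c i) a s' * phiDot Φ θ s') - phiDot Φ θ (c i)) := by
    simp only [← Finset.sum_neg_distrib]
    exact Finset.sum_congr rfl fun _ _ => Finset.sum_congr rfl fun _ _ => by ring
  rw [h4]
  linarith

lemma key_bound {S A : Type} [Fintype S] [Fintype A] {d m : ℕ} (γ : ℝ)
    (hγ0 : 0 ≤ γ) (hγ1 : γ < 1)
    (P : S → A → S → ℝ) (hP0 : ∀ s a s', 0 ≤ P s a s')
    (hP1 : ∀ s a, ∑ s', P s a s' = 1)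
    (Φ : S → Fin d → ℝ) (hfeat : ∃ η : Fin d → ℝ, ∀ s, phiDot Φ η s = 1)
    (c : Fin m → S) (s₀ : S) (v : S → ℝ) (θ : Fin d → ℝ) (ε : ℝ)
    (hε : ∀ s, |v s - phiDot Φ θ s| ≤ ε)
    (lam : Option (Fin m) × A → ℝ)
    (hlam : InLambda lam) (hconstr : CoreLPConstraint γ P Φ s₀ c lam) :
    |∑ i, ∑ a, lam (some i, a) * (v (c i) - γ * ∑ s', P (c i) a s' * v s') -
      γ * ∑ a, lam (none, a) * ∑ s', P s₀ a s' * v s'| ≤ 2 * γ * ε / (1 - γ) := by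
  obtain ⟨η, hη⟩ := hfeat
  have hg : (0:ℝ) < 1 - γ := by linarith
  have hmass : ∑ i, ∑ a, lam (some i, a) = γ / (1 - γ) := by
    have := constr_phi γ P Φ c s₀ lam hlam hconstr η
    simp only [hη, mul_one, hP1, hlam.2, ← Finset.sum_mul] at this
    rw [eq_div_iff hg.ne']; exact this.symm
  have hw := constr_phi γ P Φ c s₀ lam hlam hconstr θ
  have hPd : ∀ s a, |∑ s', P s a s' * v s' - ∑ s', P s a s' * phiDot Φ θ s'| ≤ ε := by
    intro s a
    rw [← Finset.sum_sub_distrib]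
    calc _ ≤ ∑ s', |P s a s' * v s' - P s a s' * phiDot Φ θ s'| := Finset.abs_sum_le_sum_abs _ _
      _ ≤ ∑ s', P s a s' * ε := by
        refine Finset.sum_le_sum fun s' _ => ?_
        rw [← mul_sub, abs_mul, abs_of_nonneg (hP0 s a s')]
        exact mul_le_mul_of_nonneg_left (hε s') (hP0 s a s')
      _ = ε := by rw [← Finset.sum_mul, hP1, one_mul]
  have h1 : |∑ i, ∑ a, lam (some i, a) * (v (c i) - γ * ∑ s', P (c i) a s' * v s') -
      ∑ i, ∑ a, lam (some i, a) *
        (phiDot Φ θ (c i) - γ * ∑ s', P (c i) a s' * phiDot Φ θ s')| ≤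
      γ / (1 - γ) * ((1 + γ) * ε) := by
    rw [← hmass, ← Finset.sum_sub_distrib, Finset.sum_mul]
    refine (Finset.abs_sum_le_sum_abs _ _).trans (Finset.sum_le_sum fun i _ => ?_)
    rw [← Finset.sum_sub_distrib, Finset.sum_mul]
    refine (Finset.abs_sum_le_sum_abs _ _).trans (Finset.sum_le_sum fun a _ => ?_)
    rw [← mul_sub, abs_mul, abs_of_nonneg (hlam.1 _)]
    refine mul_le_mul_of_nonneg_left ?_ (hlam.1 _)
    have e1 := abs_le.1 (hε (c i))
    have e2 := abs_le.1 (hPd (c i) a)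
    rw [abs_le]
    constructor <;> nlinarith [mul_le_mul_of_nonneg_left e2.1 hγ0,
      mul_le_mul_of_nonneg_left e2.2 hγ0]
  have h2 : |∑ a, lam (none, a) * ∑ s', P s₀ a s' * v s' -
      ∑ a, lam (none, a) * ∑ s', P s₀ a s' * phiDot Φ θ s'| ≤ ε := by
    rw [← Finset.sum_sub_distrib]
    calc _ ≤ ∑ a, lam (none, a) * ε := by
          refine (Finset.abs_sum_le_sum_abs _ _).trans (Finset.sum_le_sum fun a _ => ?_)
          rw [← mul_sub, abs_mul, abs_of_nonneg (hlam.1 _)]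
          exact mul_le_mul_of_nonneg_left (hPd s₀ a) (hlam.1 _)
      _ = ε := by rw [← Finset.sum_mul, hlam.2, one_mul]
  have h3 : 2 * γ * ε / (1 - γ) = γ / (1 - γ) * ((1 + γ) * ε) + γ * ε := by
    field_simp; ring
  rw [h3]
  rw [← hw] at h1
  have e1 := abs_le.1 h1
  have e2 := abs_le.1 h2
  rw [abs_le]
  constructor <;> nlinarith [mul_le_mul_of_nonneg_left e2.1 hγ0,
      mul_le_mul_of_nonneg_left e2.2 hγ0]

lemma exists_feasible {S A : Type} [Fintype S] [Fintype A] {d m : ℕ} (γ : ℝ)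
    (hγ0 : 0 ≤ γ) (hγ1 : γ < 1)
    (P : S → A → S → ℝ) (hP0 : ∀ s a s', 0 ≤ P s a s')
    (hP1 : ∀ s a, ∑ s', P s a s' = 1)
    (Φ : S → Fin d → ℝ) (hfeat : ∃ η : Fin d → ℝ, ∀ s, phiDot Φ η s = 1)
    (c : Fin m → S)
    (hcore : ∃ Z : S → Fin m → ℝ, (∀ s i, 0 ≤ Z s i) ∧
      ∀ s j, Φ s j = ∑ i, Z s i * Φ (c i) j)
    (s₀ : S) (g : S → A) :
    ∃ lam : Option (Fin m) × A → ℝ, InLambda lam ∧ CoreLPConstraint γ P Φ s₀ c lam ∧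
      ∀ o a, a ≠ g (splus s₀ c o) → lam (o, a) = 0 := by
  classical
  obtain ⟨η, hη⟩ := hfeat
  obtain ⟨Z, hZ0, hZ⟩ := hcore
  have hZ1 : ∀ s, ∑ k, Z s k = 1 := by
    intro s
    have h := hη s
    simp only [phiDot] at h
    simp only [hZ s, Finset.sum_mul] at h
    rw [Finset.sum_comm] at h
    rw [← h]
    refine Finset.sum_congr rfl fun k _ => ?_
    have h2 := hη (c k)
    simp only [phiDot] at h2
    simp only [mul_assoc, ← Finset.mul_sum, h2, mul_one]
  have hPZ : ∀ s a j, ∑ s', P s a s' * Φ s' j =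
      ∑ k, (∑ s', P s a s' * Z s' k) * Φ (c k) j := by
    intro s a j
    simp only [Finset.sum_mul]
    rw [Finset.sum_comm]
    refine Finset.sum_congr rfl fun s' _ => ?_
    rw [hZ s' j, Finset.mul_sum]
    exact Finset.sum_congr rfl fun _ _ => by ring
  let K : Matrix (Fin m) (Fin m) ℝ := Matrix.of fun i k => ∑ s', P (c i) (g (c i)) s' * Z s' k
  obtain ⟨N, -, hN, -, hN0⟩ := neumann γ hγ0 hγ1 K
    (fun i k => Finset.sum_nonneg fun s' _ => mul_nonneg (hP0 _ _ _) (hZ0 _ _))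
    (fun i => by
      simp only [K, Matrix.of_apply]
      rw [Finset.sum_comm]
      simp only [← Finset.mul_sum, hZ1, mul_one, hP1])
  let b : Fin m → ℝ := fun k => γ * ∑ s', P s₀ (g s₀) s' * Z s' k
  have hb0 : ∀ k, 0 ≤ b k := fun k =>
    mul_nonneg hγ0 (Finset.sum_nonneg fun s' _ => mul_nonneg (hP0 _ _ _) (hZ0 _ _))
  let x : Fin m → ℝ := Matrix.vecMul b N
  have hx0 : ∀ k, 0 ≤ x k := fun k => by
    change 0 ≤ ∑ i, b i * N i k
    exact Finset.sum_nonneg fun i _ => mul_nonneg (hb0 i) (hN0 i k)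
  have hx : ∀ k, x k - γ * ∑ i, x i * K i k = b k := by
    intro k
    have h : Matrix.vecMul x (1 - γ • K) = b := by
      simp only [x]
      rw [Matrix.vecMul_vecMul, hN, Matrix.vecMul_one]
    have h := congrFun h k
    rw [Matrix.vecMul_sub, Matrix.vecMul_one, Pi.sub_apply] at h
    rw [← h]
    congr 1
    simp only [Matrix.vecMul, dotProduct, Matrix.smul_apply, smul_eq_mul, Finset.mul_sum]
    exact Finset.sum_congr rfl fun _ _ => by ring
  let y : Option (Fin m) → ℝ := fun o => o.elim 1 x
  let δ : S → A → ℝ := fun s a => if a = g s then 1 else 0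
  have hδ0 : ∀ s a, 0 ≤ δ s a := fun s a => by
    simp only [δ]; split_ifs <;> norm_num
  have hδ : ∀ s (F : A → ℝ), ∑ a, δ s a * F a = F (g s) := fun s F => by simp [δ]
  refine ⟨fun p => δ (splus s₀ c p.1) p.2 * y p.1, ⟨fun p => ?_, ?_⟩, ?_, ?_⟩
  · rcases p with ⟨o, a⟩
    refine mul_nonneg (hδ0 _ _) ?_
    cases o with
    | none => exact zero_le_one
    | some i => exact hx0 i
  · exact hδ s₀ fun _ => 1
  · intro j
    rw [sum_split]
    simp only [mul_assoc, splus, Option.elim, y, hPZ, one_mul]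
    simp only [hδ]
    have h1 : ∑ k, (x k - γ * ∑ i, x i * K i k) * Φ (c k) j = ∑ k, b k * Φ (c k) j :=
      Finset.sum_congr rfl fun k _ => by rw [hx k]
    have h2 : ∑ k, b k * Φ (c k) j =
        γ * ∑ k, (∑ s', P s₀ (g s₀) s' * Z s' k) * Φ (c k) j := by
      rw [Finset.mul_sum]
      exact Finset.sum_congr rfl fun k _ => by simp only [b]; ring
    have h3 : ∑ k, (x k - γ * ∑ i, x i * K i k) * Φ (c k) j =
        -∑ i, x i * (γ * ∑ k, (∑ s', P (c i) (g (c i)) s' * Z s' k) * Φ (c k) j - Φ (c i) j) := by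
      have h4 : ∑ k, (γ * ∑ i, x i * K i k) * Φ (c k) j =
          ∑ i, x i * (γ * ∑ k, K i k * Φ (c k) j) := by
        simp only [Finset.mul_sum, Finset.sum_mul]
        rw [Finset.sum_comm]
        exact Finset.sum_congr rfl fun _ _ => Finset.sum_congr rfl fun _ _ => by ring
      simp only [sub_mul, mul_sub, Finset.sum_sub_distrib, h4]
      simp only [K, Matrix.of_apply]
      ring
    linarith
  · intro o a h
    simp [δ, h]

/-- a maximizer of CoreLP yields a near-optimal action distribution at `s₀`. -/
theorem corelp_maximizer_action_quality
    {S A : Type} [Fintype S] [Fintype A] [DecidableEq S] [Nonempty S] [Nonempty A]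
    {d m : ℕ} (γ : ℝ) (hγ0 : 0 ≤ γ) (hγ1 : γ < 1)
    (P : S → A → S → ℝ) (hP0 : ∀ s a s', 0 ≤ P s a s')
    (hP1 : ∀ s a, ∑ s', P s a s' = 1)
    (r : S → A → ℝ)
    (Φ : S → Fin d → ℝ) (hfeat : ∃ η : Fin d → ℝ, ∀ s, phiDot Φ η s = 1)
    (c : Fin m → S) (hc : Function.Injective c)
    (hcore : ∃ Z : S → Fin m → ℝ, (∀ s i, 0 ≤ Z s i) ∧
      ∀ s j, Φ s j = ∑ i, Z s i * Φ (c i) j)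
    (s₀ : S)
    (lamDag : Option (Fin m) × A → ℝ)
    (hlam : InLambda lamDag) (hconstr : CoreLPConstraint γ P Φ s₀ c lamDag)
    (hmax : ∀ lam : Option (Fin m) × A → ℝ, InLambda lam →
      CoreLPConstraint γ P Φ s₀ c lam → CoreLPObj r s₀ c lam ≤ CoreLPObj r s₀ c lamDag) :
    vstar γ P r s₀ - ∑ a, lamDag (none, a) * qstar γ P r s₀ a ≤
      20 * γ * epsApprox Φ (vstar γ P r) / (1 - γ) := by

  obtain ⟨v, hv1, hv2⟩ := bellman_fixed γ hγ0 hγ1 P hP0 hP1 r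
  have hvs := vstar_eq γ hγ0 hγ1 P hP0 hP1 r v hv1 hv2
  simp only [qstar, hvs]
  choose g hg using hv2
  obtain ⟨lam, hl1, hl2, hl3⟩ := exists_feasible γ hγ0 hγ1 P hP0 hP1 Φ hfeat c hcore s₀ g
  have hg1 : (0:ℝ) < 1 - γ := by linarith
  have hrw : 20 * γ * epsApprox Φ v / (1 - γ) = (20 * γ / (1 - γ)) * epsApprox Φ v := by ring
  rw [hrw, epsApprox, Real.mul_iInf_of_nonneg (by positivity)]
  refine le_ciInf fun θ => ?_
  set ε := ⨆ s : S, |v s - phiDot Φ θ s| with hεdef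
  have hε : ∀ s, |v s - phiDot Φ θ s| ≤ ε := fun s =>
    le_ciSup (f := fun s => |v s - phiDot Φ θ s|) (Set.finite_range _).bddAbove s
  have hε0 : 0 ≤ ε := (abs_nonneg _).trans (hε s₀)
  have k1 := abs_le.1 (key_bound γ hγ0 hγ1 P hP0 hP1 Φ hfeat c s₀ v θ ε hε lamDag hlam hconstr)
  have k2 := abs_le.1 (key_bound γ hγ0 hγ1 P hP0 hP1 Φ hfeat c s₀ v θ ε hε lam hl1 hl2)
  have hm := hmax lam hl1 hl2
  simp only [CoreLPObj, sum_split] at hm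
  simp only [splus, Option.elim] at hm
  have u1 : ∑ i, ∑ a, lamDag (some i, a) * r (c i) a ≤
      ∑ i, ∑ a, lamDag (some i, a) * (v (c i) - γ * ∑ s', P (c i) a s' * v s') :=
    Finset.sum_le_sum fun i _ => Finset.sum_le_sum fun a _ =>
      mul_le_mul_of_nonneg_left (by linarith [hv1 (c i) a]) (hlam.1 _)
  have u2 : ∑ i, ∑ a, lam (some i, a) * r (c i) a =
      ∑ i, ∑ a, lam (some i, a) * (v (c i) - γ * ∑ s', P (c i) a s' * v s') := by
    refine Finset.sum_congr rfl fun i _ => Finset.sum_congr rfl fun a _ => ?_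
    by_cases h : a = g (c i)
    · subst h
      rw [eq_sub_of_add_eq (hg (c i)).symm]
    · rw [hl3 (some i) a h, zero_mul, zero_mul]
  have u3 : ∑ a, lam (none, a) * r s₀ a + γ * ∑ a, lam (none, a) * ∑ s', P s₀ a s' * v s' =
      v s₀ := by
    rw [Finset.mul_sum, ← Finset.sum_add_distrib]
    calc _ = ∑ a, lam (none, a) * v s₀ := by
          refine Finset.sum_congr rfl fun a _ => ?_
          by_cases h : a = g s₀
          · subst h
            conv_rhs => rw [hg s₀]
            ring
          · rw [hl3 none a h]; ring
      _ = v s₀ := by rw [← Finset.sum_mul, hl1.2, one_mul]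
  have u4 : ∑ a, lamDag (none, a) * (r s₀ a + γ * ∑ s', P s₀ a s' * v s') =
      ∑ a, lamDag (none, a) * r s₀ a + γ * ∑ a, lamDag (none, a) * ∑ s', P s₀ a s' * v s' := by
    rw [Finset.mul_sum, ← Finset.sum_add_distrib]
    exact Finset.sum_congr rfl fun a _ => by ring
  have hnn : 0 ≤ γ * ε / (1 - γ) := by positivity
  have e1 : 2 * γ * ε / (1 - γ) = 2 * (γ * ε / (1 - γ)) := by ring
  have e2 : 20 * γ / (1 - γ) * ε = 20 * (γ * ε / (1 - γ)) := by ring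
  rw [e1] at k1 k2
  rw [e2, u4]
  linarith [k1.1, k1.2, k2.1, k2.2]

end MDPPlan
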